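/- Let 0 < ε < 1/5 and let G be a balanced bipartite graph on n vertices with partition classes V₁, V₂ of size n/2 each, such that every vertex of G has degree at least (1 − ε)n/2. If the edges of G are coloured red and blue and this colouring is not a split colouring, then there exist a red connected matching and a blue connected matching which are vertex-disjoint and together cover all but at most 4εn vertices of G. -/

import Mathlib

open SimpleGraph Set

/- Convention: colour `true` is red, colour `false` is blue. -/

/-- The subgraph of `G` consisting of the edges of colour `b`. -/
def monoSubgraph {V : Type*} (G : SimpleGraph V) (c : Sym2 V → Bool) (b : Bool) :
    SimpleGraph V :=
  SimpleGraph.fromEdgeSet {e | e ∈ G.edgeSet ∧ c e = b}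

/-- `S` is the vertex set of a (possibly empty, possibly trivial) path of `G`
all of whose edges have colour `b`. -/
def IsMonoPathSet {V : Type*} (G : SimpleGraph V) (c : Sym2 V → Bool) (b : Bool)
    (S : Set V) : Prop :=
  S = ∅ ∨ ∃ (u v : V) (p : G.Walk u v), p.IsPath ∧ (∀ e ∈ p.edges, c e = b) ∧
    S = {x | x ∈ p.support}

/-- `S` is the vertex set of a (possibly degenerate: empty, single vertex or single edge)
cycle of `G` all of whose edges have colour `b`. -/
def IsMonoCycleSet {V : Type*} (G : SimpleGraph V) (c : Sym2 V → Bool) (b : Bool)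
    (S : Set V) : Prop :=
  S = ∅ ∨ (∃ v, S = {v}) ∨ (∃ u v, G.Adj u v ∧ c s(u, v) = b ∧ S = {u, v}) ∨
    ∃ (v : V) (p : G.Walk v v), p.IsCycle ∧ (∀ e ∈ p.edges, c e = b) ∧
      S = {x | x ∈ p.support}

/-- `M` is a matching of `G` in colour `b` which is connected, i.e. all its edges lie in one
connected component of the subgraph formed by the edges of colour `b`. -/
def IsConnMatching {V : Type*} (G : SimpleGraph V) (c : Sym2 V → Bool) (b : Bool)
    (M : Set (Sym2 V)) : Prop :=
  (∀ e ∈ M, e ∈ G.edgeSet ∧ c e = b) ∧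
  (∀ e ∈ M, ∀ f ∈ M, e ≠ f → ∀ x, x ∈ e → x ∉ f) ∧
  (∀ e ∈ M, ∀ f ∈ M, ∀ x, x ∈ e → ∀ y, y ∈ f → (monoSubgraph G c b).Reachable x y)

/-- The set of vertices covered by a set of edges. -/
def matchSupport {V : Type*} (M : Set (Sym2 V)) : Set V := {x | ∃ e ∈ M, x ∈ e}

/-- The colouring `c` of the (bipartite, with classes `U` and `W`) graph `G` is a split
colouring: `U = A ∪ B`, `W = C ∪ D`, the edges between `A,C` and between `B,D` are blue
(`false`), and the edges between `A,D` and between `B,C` are red (`true`). -/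
def IsSplitColouring {V : Type*} (G : SimpleGraph V) (c : Sym2 V → Bool)
    (U W : Set V) : Prop :=
  ∃ A B C D : Set V,
    A ∪ B = U ∧ Disjoint A B ∧ C ∪ D = W ∧ Disjoint C D ∧
    (∀ u v, G.Adj u v →
      (((u ∈ A ∧ v ∈ C) ∨ (u ∈ C ∧ v ∈ A) ∨ (u ∈ B ∧ v ∈ D) ∨ (u ∈ D ∧ v ∈ B)) →
        c s(u, v) = false)) ∧
    (∀ u v, G.Adj u v →
      (((u ∈ A ∧ v ∈ D) ∨ (u ∈ D ∧ v ∈ A) ∨ (u ∈ B ∧ v ∈ C) ∨ (u ∈ C ∧ v ∈ B)) →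
        c s(u, v) = true))

/-- The colouring `c` of `G` is `δ`-close to a split colouring: one can delete at most
`δ|E(G)|` edges so that the remaining graph is bipartite and the colouring on it is a
split colouring. -/
def CloseToSplit {V : Type*} (G : SimpleGraph V) (c : Sym2 V → Bool) (δ : ℝ) : Prop :=
  ∃ F : Set (Sym2 V), F ⊆ G.edgeSet ∧ (F.ncard : ℝ) ≤ δ * (G.edgeSet.ncard : ℝ) ∧
    ∃ U W : Set V, U ∪ W = Set.univ ∧ Disjoint U W ∧
      (∀ u v, (G.deleteEdges F).Adj u v → ((u ∈ U ∧ v ∈ W) ∨ (u ∈ W ∧ v ∈ U))) ∧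
      IsSplitColouring (G.deleteEdges F) c U W

/-!
Place every vertex in the grid whose rows are the red components and whose columns are the blue
components: adjacent vertices share a row or a column. Put `m = n / 2` and let `d` be the largest
number of non-neighbours that a vertex has in the other class. By the deficiency form of Hall's
theorem it suffices to find a row `i` and a column `j` such that the red edges in `i` and the blue
edges in `j` leave no edgeless pair `S ⊆ V₁`, `T ⊆ V₂` with `|S| + |T| > m + 3d`.

If all of `V₁` lies in one row, an edgeless pair that is too large lies in a single column
containing more than half of all vertices; only one column does, so that column works. If `V₁`
is in neither one row nor one column, two of its vertices differ in both coordinates. Their common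
neighbours, all but `2d` of `V₂`, lie in the two opposite corners of the rectangle they span. Either
one corner contains all but `3d` of `V₂`, and its row and column work, or both corners contain more
than `d` vertices, which confines `V₁` to the other two corners; the same alternative with the
classes exchanged confines `V₂` too, and then the colouring is split.
-/

section Hall

open scoped Finset

variable {V : Type*} {H : SimpleGraph V} {X Y : Finset V} {k N : ℕ}

theorem exists_injective_of_card_le_card_biUnion_add {ι α : Type*} [Fintype ι] [DecidableEq α]
    (t : ι → Finset α) (k : ℕ) (ht : ∀ s : Finset ι, #s ≤ #(s.biUnion t) + k) :
    ∃ s : Finset ι, Fintype.card ι ≤ #s + k ∧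
      ∃ g : s → α, Function.Injective g ∧ ∀ a : s, g a ∈ t a := by
  classical
  -- Apply Hall's theorem after giving every index the same `k` additional elements.
  let t' : ι → Finset (α ⊕ Fin k) := fun a => (t a).disjSum Finset.univ
  have hall : ∀ s : Finset ι, #s ≤ #(s.biUnion t') := by
    intro s
    rcases s.eq_empty_or_nonempty with rfl | ⟨a, ha⟩
    · simp only [Finset.card_empty, Finset.biUnion_empty, le_refl]
    have hunion : s.biUnion t' = (s.biUnion t).disjSum Finset.univ := by
      ext (b | b)
      · simp only [t', Finset.mem_biUnion, Finset.inl_mem_disjSum]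
      · simpa only [t', Finset.mem_biUnion, Finset.inr_mem_disjSum, Finset.mem_univ, and_true,
          iff_true] using ⟨a, ha⟩
    rw [hunion, Finset.card_disjSum, Finset.card_univ, Fintype.card_fin]
    exact ht s
  obtain ⟨g, hg, hgt⟩ := (Finset.all_card_le_biUnion_card_iff_exists_injective t').1 hall
  let s : Finset ι := {a | (g a).isLeft}
  have hleft (a : s) : (g a).isLeft := (Finset.mem_filter.1 a.2).2
  refine ⟨s, ?_, fun a => (g a.1).getLeft (hleft a), fun a b hab => ?_, fun a => ?_⟩
  · have hright : #{a | ¬ (g a).isLeft} ≤ k := by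
      have hmaps : ∀ a ∈ ({a | ¬ (g a).isLeft} : Finset ι),
          g a ∈ (Finset.univ : Finset (Fin k)).map Function.Embedding.inr := by
        intro a ha
        have hr : (g a).isRight := by simpa using ha
        exact Finset.mem_map.2 ⟨(g a).getRight hr, Finset.mem_univ _, Sum.inr_getRight _ hr⟩
      simpa using Finset.card_le_card_of_injOn g hmaps hg.injOn
    have hsum := Finset.card_filter_add_card_filter_not (s := Finset.univ) fun a => (g a).isLeft
    rw [Finset.card_univ] at hsum
    change _ ≤ #{a | (g a).isLeft} + k
    omega
  · rw [Sum.getLeft_eq_iff, Sum.inl_getLeft] at hab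
    exact Subtype.ext (hg hab)
  · have hmem := hgt a
    rwa [← Sum.inl_getLeft (g a.1) (hleft a), Finset.inl_mem_disjSum] at hmem

/-- A bipartite hole of `H` is a pair of sets with no edge of `H` between them. `HoleBound H X Y N`
says that the holes with one side in `X` and the other in `Y` have at most `N` vertices. -/
def HoleBound (H : SimpleGraph V) (X Y : Finset V) (N : ℕ) : Prop :=
  ∀ S ⊆ X, ∀ T ⊆ Y, (∀ x ∈ S, ∀ y ∈ T, ¬ H.Adj x y) → #S + #T ≤ N

theorem HoleBound.symm (h : HoleBound H X Y N) : HoleBound H Y X N := fun T hT S hS hTS =>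
  add_comm #T #S ▸ h S hS T hT fun x hx y hy hxy => hTS y hy x hx hxy.symm

theorem HoleBound.mono {N' : ℕ} (h : HoleBound H X Y N) (hN : N ≤ N') : HoleBound H X Y N' :=
  fun S hS T hT hST => (h S hS T hT hST).trans hN

theorem HoleBound.exists_injective (h : HoleBound H X Y (#Y + k)) :
    ∃ s : Finset X, #X ≤ #s + k ∧
      ∃ g : s → V, Function.Injective g ∧ ∀ x : s, g x ∈ Y ∧ H.Adj x (g x) := by
  classical
  let t : X → Finset V := fun x => {y ∈ Y | H.Adj x y}
  have ht : ∀ s : Finset X, #s ≤ #(s.biUnion t) + k := by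
    intro s
    have hsub : s.biUnion t ⊆ Y := Finset.biUnion_subset.2 fun x _ => Finset.filter_subset _ _
    have hhole := h (s.map (Function.Embedding.subtype _)) (Finset.map_subtype_subset s)
      (Y \ s.biUnion t) Finset.sdiff_subset (by
        intro x hx y hy hxy
        obtain ⟨x, hxs, rfl⟩ := Finset.mem_map.1 hx
        rw [Finset.mem_sdiff] at hy
        exact hy.2 (Finset.mem_biUnion.2 ⟨x, hxs, Finset.mem_filter.2 ⟨hy.1, hxy⟩⟩))
    rw [Finset.card_map, Finset.card_sdiff_of_subset hsub] at hhole
    have := Finset.card_le_card hsub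
    omega
  obtain ⟨s, hs, g, hg, hgt⟩ := exists_injective_of_card_le_card_biUnion_add t k ht
  rw [Fintype.card_coe] at hs
  exact ⟨s, hs, g, hg, fun x => Finset.mem_filter.1 (hgt x)⟩

theorem HoleBound.exists_isMatching (hXY : Disjoint X Y) (h : HoleBound H X Y (#Y + k)) :
    ∃ M : H.Subgraph, M.IsMatching ∧ 2 * #X ≤ M.verts.ncard + 2 * k := by
  obtain ⟨s, hs, g, hg, hgY⟩ := h.exists_injective
  let e : s → V := fun x => x.1.1
  have he : Function.Injective e := Subtype.val_injective.comp Subtype.val_injective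
  have hdisj : Disjoint (range e) (range g) := by
    rw [Set.disjoint_left]
    rintro _ ⟨x, rfl⟩ ⟨x', hx'⟩
    have hY := (hgY x').1
    rw [hx'] at hY
    exact Finset.disjoint_left.1 hXY x.1.2 hY
  obtain ⟨M, hMverts, hM⟩ := Subgraph.IsMatching.exists_of_disjoint_sets_of_equiv hdisj
    ((Equiv.ofInjective e he).symm.trans (Equiv.ofInjective g hg)) (by
      rintro ⟨_, x, rfl⟩
      simpa [Equiv.ofInjective_symm_apply] using (hgY x).2)
  refine ⟨M, hM, ?_⟩
  have hcard {f : s → V} (hf : Function.Injective f) : (range f).ncard = #s := by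
    rw [← Set.image_univ, Set.ncard_image_of_injective _ hf, Set.ncard_univ,
      Nat.card_eq_fintype_card, Fintype.card_coe]
  rw [hMverts, Set.ncard_union_eq hdisj, hcard he, hcard hg]
  omega

end Hall

section Grid

open scoped Finset

variable {V : Type*} {G R B : SimpleGraph V} {X Y : Finset V} {d k : ℕ}

/-- Every vertex of `X` has at most `d` non-neighbours in `Y`, and vice versa. -/
structure NearlyComplete (G : SimpleGraph V) (X Y : Finset V) (d : ℕ) : Prop where
  left : ∀ x ∈ X, ∀ T ⊆ Y, (∀ y ∈ T, ¬ G.Adj x y) → #T ≤ d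
  right : ∀ y ∈ Y, ∀ S ⊆ X, (∀ x ∈ S, ¬ G.Adj y x) → #S ≤ d

open scoped Classical in
/-- The vertices of `Z` lying in the connected component `C`. Applied twice, to a component of `R`
and one of `B`, it gives the cells of the grid formed by the components of `R` and of `B`. -/
noncomputable def componentPart (C : G.ConnectedComponent) (Z : Finset V) : Finset V :=
  {z ∈ Z | G.connectedComponentMk z = C}

/-- The graph formed by the edges of `R` in the component `i` and the edges of `B` in the
component `j`. -/
def componentUnion (R B : SimpleGraph V) (i : R.ConnectedComponent) (j : B.ConnectedComponent) :
    SimpleGraph V :=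
  (R.induce i.supp).spanningCoe ⊔ (B.induce j.supp).spanningCoe

/-- `X` and `Y` occupy opposite pairs of corners of a rectangle in the grid formed by the components
of `R` and of `B`. When `R` and `B` are the two colours, this makes the colouring split. -/
def IsGridSplit (R B : SimpleGraph V) (X Y : Finset V) : Prop :=
  ∃ (i k : R.ConnectedComponent) (j l : B.ConnectedComponent), i ≠ k ∧ j ≠ l ∧
    (∀ x ∈ X, (R.connectedComponentMk x = i ∧ B.connectedComponentMk x = j) ∨
      (R.connectedComponentMk x = k ∧ B.connectedComponentMk x = l)) ∧
    (∀ y ∈ Y, (R.connectedComponentMk y = i ∧ B.connectedComponentMk y = l) ∨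
      (R.connectedComponentMk y = k ∧ B.connectedComponentMk y = j))

theorem mem_componentPart {C : G.ConnectedComponent} {Z : Finset V} {z : V} :
    z ∈ componentPart C Z ↔ z ∈ Z ∧ G.connectedComponentMk z = C := by
  simp only [componentPart, Finset.mem_filter]

theorem componentPart_subset (C : G.ConnectedComponent) (Z : Finset V) : componentPart C Z ⊆ Z :=
  fun _ hz => (mem_componentPart.1 hz).1

theorem componentPart_componentPart_subset (i : R.ConnectedComponent) (j : B.ConnectedComponent)
    (Z : Finset V) : componentPart i (componentPart j Z) ⊆ Z :=
  (componentPart_subset _ _).trans (componentPart_subset _ _)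

theorem card_componentPart_add_le {C C' : G.ConnectedComponent} (hC : C ≠ C') (Z : Finset V) :
    #(componentPart C Z) + #(componentPart C' Z) ≤ #Z := by
  classical
  have hdisj : Disjoint (componentPart C Z) (componentPart C' Z) := by
    rw [Finset.disjoint_left]
    intro z hz hz'
    exact hC ((mem_componentPart.1 hz).2.symm.trans (mem_componentPart.1 hz').2)
  rw [← Finset.card_union_of_disjoint hdisj]
  exact Finset.card_le_card
    (Finset.union_subset (componentPart_subset _ _) (componentPart_subset _ _))

theorem componentUnion_adj {i : R.ConnectedComponent} {j : B.ConnectedComponent} {u v : V} :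
    (componentUnion R B i j).Adj u v ↔
      (R.Adj u v ∧ R.connectedComponentMk u = i) ∨ (B.Adj u v ∧ B.connectedComponentMk u = j) := by
  have key {G : SimpleGraph V} (C : G.ConnectedComponent) :
      (G.induce C.supp).spanningCoe.Adj u v ↔ G.Adj u v ∧ G.connectedComponentMk u = C := by
    simp only [SimpleGraph.map_adj, comap_adj, Function.Embedding.subtype_apply, Subtype.exists]
    constructor
    · rintro ⟨u, hu, v, -, huv, rfl, rfl⟩
      exact ⟨huv, hu⟩
    · rintro ⟨huv, hu⟩
      exact ⟨u, hu, v, (ConnectedComponent.connectedComponentMk_eq_of_adj huv).symm.trans hu,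
        huv, rfl, rfl⟩
  rw [componentUnion, sup_adj, key, key]

theorem componentUnion_comm (i : R.ConnectedComponent) (j : B.ConnectedComponent) :
    componentUnion R B i j = componentUnion B R j i :=
  sup_comm _ _

theorem connectedComponentMk_eq_or_eq_of_sup_adj {u v : V} (h : (R ⊔ B).Adj u v) :
    R.connectedComponentMk u = R.connectedComponentMk v ∨
      B.connectedComponentMk u = B.connectedComponentMk v :=
  h.imp ConnectedComponent.connectedComponentMk_eq_of_adj
    ConnectedComponent.connectedComponentMk_eq_of_adj

theorem forall_eq_or_forall_eq_of_pairwise {ι α β : Type*} {s : Set ι} [Nonempty ι]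
    (f : ι → α) (g : ι → β) (h : ∀ x ∈ s, ∀ y ∈ s, f x = f y ∨ g x = g y) :
    (∃ a, ∀ x ∈ s, f x = a) ∨ ∃ b, ∀ x ∈ s, g x = b := by
  rcases s.eq_empty_or_nonempty with rfl | ⟨x, hx⟩
  · exact Or.inl ⟨f (Classical.arbitrary ι), fun x hx => (Set.notMem_empty x hx).elim⟩
  by_contra! hne
  obtain ⟨y, hy, hfy⟩ := hne.1 (f x)
  obtain ⟨z, hz, hgz⟩ := hne.2 (g x)
  have hxy := h x hx y hy
  have hxz := h x hx z hz
  have hyz := h y hy z hz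
  grind

namespace NearlyComplete

theorem symm (h : NearlyComplete G X Y d) : NearlyComplete G Y X d :=
  ⟨h.right, h.left⟩

theorem exists_adj (h : NearlyComplete G X Y d) {x : V} (hx : x ∈ X) {T : Finset V} (hT : T ⊆ Y)
    (hd : d < #T) : ∃ y ∈ T, G.Adj x y := by
  by_contra! hno
  exact hd.not_ge (h.left x hx T hT hno)

theorem exists_common_adj (h : NearlyComplete G X Y d) {x x' : V} (hx : x ∈ X) (hx' : x' ∈ X)
    {T : Finset V} (hT : T ⊆ Y) (hd : 2 * d < #T) : ∃ y ∈ T, G.Adj x y ∧ G.Adj x' y := by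
  classical
  have hnon : #{y ∈ T | ¬ G.Adj x y} ≤ d :=
    h.left x hx _ ((Finset.filter_subset _ _).trans hT) fun y hy => (Finset.mem_filter.1 hy).2
  have hsum := Finset.card_filter_add_card_filter_not (s := T) (G.Adj x)
  obtain ⟨y, hy, hx'y⟩ :=
    h.exists_adj hx' ((Finset.filter_subset (G.Adj x) T).trans hT) (by omega)
  rw [Finset.mem_filter] at hy
  exact ⟨y, hy.1, hy.2, hx'y⟩

theorem holeBound_of_card_le_card_cell (h : NearlyComplete (R ⊔ B) X Y d) (hXY : #X = #Y)
    (hk : d ≤ k) {i : R.ConnectedComponent} {j : B.ConnectedComponent}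
    (hcell : #X ≤ #(componentPart i (componentPart j X)) + k) :
    HoleBound (componentUnion R B i j) X Y (#Y + k) := by
  classical
  intro S hS T hT hST
  by_contra! hlt
  have hSX := Finset.card_le_card hS
  have hTY := Finset.card_le_card hT
  obtain ⟨x, hx⟩ : (S ∩ componentPart i (componentPart j X)).Nonempty :=
    Finset.inter_nonempty_of_card_lt_card_add_card hS
      (componentPart_componentPart_subset i j X) (by omega)
  simp only [Finset.mem_inter, mem_componentPart] at hx
  obtain ⟨hxS, ⟨hxX, hxj⟩, hxi⟩ := hx
  obtain ⟨y, hy, hxy⟩ := h.exists_adj hxX hT (by omega)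
  exact hST x hxS y hy (componentUnion_adj.2 (hxy.imp (⟨·, hxi⟩) (⟨·, hxj⟩)))

theorem exists_ne_card_le_of_hole (h : NearlyComplete (R ⊔ B) X Y d) {i : R.ConnectedComponent}
    (hi : ∀ x ∈ X, R.connectedComponentMk x = i) (j : B.ConnectedComponent) {S T : Finset V}
    (hS : S ⊆ X) (hT : T ⊆ Y) (hST : ∀ x ∈ S, ∀ y ∈ T, ¬ (componentUnion R B i j).Adj x y)
    (hcS : d < #S) (hcT : 2 * d < #T) :
    ∃ j' ≠ j, #S + #T ≤ #(componentPart j' X) + #(componentPart j' Y) := by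
  have hblue : ∀ x ∈ S, ∀ y ∈ T, (R ⊔ B).Adj x y →
      B.connectedComponentMk x = B.connectedComponentMk y ∧ B.connectedComponentMk x ≠ j := by
    intro x hx y hy hxy
    have hno := hST x hx y hy
    rw [componentUnion_adj, not_or] at hno
    have hB : B.Adj x y := hxy.resolve_left fun hR => hno.1 ⟨hR, hi x (hS hx)⟩
    exact ⟨ConnectedComponent.connectedComponentMk_eq_of_adj hB, fun hj => hno.2 ⟨hB, hj⟩⟩
  obtain ⟨x₀, hx₀⟩ : S.Nonempty := Finset.card_pos.1 (by omega)
  have hSeq : ∀ x ∈ S, B.connectedComponentMk x = B.connectedComponentMk x₀ := by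
    intro x hx
    obtain ⟨y, hy, hxy, hx₀y⟩ := h.exists_common_adj (hS hx) (hS hx₀) hT hcT
    rw [(hblue x hx y hy hxy).1, (hblue x₀ hx₀ y hy hx₀y).1]
  have hTeq : ∀ y ∈ T, B.connectedComponentMk y = B.connectedComponentMk x₀ := by
    intro y hy
    obtain ⟨x, hx, hyx⟩ := h.symm.exists_adj (hT hy) hS hcS
    rw [← (hblue x hx y hy hyx.symm).1, hSeq x hx]
  refine ⟨B.connectedComponentMk x₀, ?_, add_le_add ?_ ?_⟩
  · obtain ⟨y, hy, hxy⟩ := h.exists_adj (hS hx₀) hT (by omega)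
    exact (hblue x₀ hx₀ y hy hxy).2
  · exact Finset.card_le_card fun x hx => mem_componentPart.2 ⟨hS hx, hSeq x hx⟩
  · exact Finset.card_le_card fun y hy => mem_componentPart.2 ⟨hT hy, hTeq y hy⟩

theorem exists_holeBound_of_forall_eq [Nonempty V] (h : NearlyComplete (R ⊔ B) X Y d)
    (hXY : #X = #Y) {i : R.ConnectedComponent} (hi : ∀ x ∈ X, R.connectedComponentMk x = i) :
    ∃ j, HoleBound (componentUnion R B i j) X Y (#Y + 2 * d) := by
  by_contra! hno
  have hlarge : ∀ j : B.ConnectedComponent,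
      ∃ j' ≠ j, #Y < #(componentPart j' X) + #(componentPart j' Y) := by
    intro j
    have hj := hno j
    simp only [HoleBound, not_forall, not_le] at hj
    obtain ⟨S, hS, T, hT, hST, hlt⟩ := hj
    have hSX := Finset.card_le_card hS
    have hTY := Finset.card_le_card hT
    obtain ⟨j', hj', hle⟩ :=
      h.exists_ne_card_le_of_hole hi j hS hT hST (by omega) (by omega)
    exact ⟨j', hj', by omega⟩
  obtain ⟨j₁, -, hj₁⟩ := hlarge (B.connectedComponentMk (Classical.arbitrary V))
  obtain ⟨j₂, hne, hj₂⟩ := hlarge j₁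
  have hX := card_componentPart_add_le hne X
  have hY := card_componentPart_add_le hne Y
  omega

theorem card_le_card_opposite_cells_add (h : NearlyComplete (R ⊔ B) X Y d) {x x' : V}
    (hx : x ∈ X) (hx' : x' ∈ X) (hR : R.connectedComponentMk x ≠ R.connectedComponentMk x')
    (hB : B.connectedComponentMk x ≠ B.connectedComponentMk x') :
    #Y ≤ #(componentPart (R.connectedComponentMk x)
          (componentPart (B.connectedComponentMk x') Y)) +
      #(componentPart (R.connectedComponentMk x')
          (componentPart (B.connectedComponentMk x) Y)) + 2 * d := by
  classical
  set P := componentPart (R.connectedComponentMk x) (componentPart (B.connectedComponentMk x') Y)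
  set Q := componentPart (R.connectedComponentMk x') (componentPart (B.connectedComponentMk x) Y)
  have hrest : #(Y \ (P ∪ Q)) ≤ 2 * d := by
    by_contra! hlt
    obtain ⟨y, hy, hxy, hx'y⟩ := h.exists_common_adj hx hx' Finset.sdiff_subset hlt
    have hxy' := connectedComponentMk_eq_or_eq_of_sup_adj hxy
    have hx'y' := connectedComponentMk_eq_or_eq_of_sup_adj hx'y
    simp only [P, Q, Finset.mem_sdiff, Finset.mem_union, mem_componentPart] at hy
    grind
  have hsdiff := Finset.le_card_sdiff (P ∪ Q) Y
  have hunion := Finset.card_union_le P Q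
  omega

theorem mem_cell_or_mem_cell (h : NearlyComplete (R ⊔ B) X Y d) {i k : R.ConnectedComponent}
    {j l : B.ConnectedComponent} (hik : i ≠ k) (hjl : j ≠ l)
    (hil : d < #(componentPart i (componentPart l Y)))
    (hkj : d < #(componentPart k (componentPart j Y))) {x : V} (hx : x ∈ X) :
    (R.connectedComponentMk x = i ∧ B.connectedComponentMk x = j) ∨
      (R.connectedComponentMk x = k ∧ B.connectedComponentMk x = l) := by
  obtain ⟨y, hy, hxy⟩ := h.exists_adj hx (componentPart_componentPart_subset i l Y) hil
  obtain ⟨z, hz, hxz⟩ := h.exists_adj hx (componentPart_componentPart_subset k j Y) hkj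
  have hxy' := connectedComponentMk_eq_or_eq_of_sup_adj hxy
  have hxz' := connectedComponentMk_eq_or_eq_of_sup_adj hxz
  simp only [mem_componentPart] at hy hz
  grind

theorem lt_card_opposite_cells (h : NearlyComplete (R ⊔ B) X Y d)
    (hcell : ∀ (i : R.ConnectedComponent) (j : B.ConnectedComponent),
      #(componentPart i (componentPart j Y)) + 3 * d < #Y) {x x' : V}
    (hx : x ∈ X) (hx' : x' ∈ X) (hR : R.connectedComponentMk x ≠ R.connectedComponentMk x')
    (hB : B.connectedComponentMk x ≠ B.connectedComponentMk x') :
    d < #(componentPart (R.connectedComponentMk x)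
        (componentPart (B.connectedComponentMk x') Y)) ∧
      d < #(componentPart (R.connectedComponentMk x')
        (componentPart (B.connectedComponentMk x) Y)) := by
  have hY := h.card_le_card_opposite_cells_add hx hx' hR hB
  have hP := hcell (R.connectedComponentMk x) (B.connectedComponentMk x')
  have hQ := hcell (R.connectedComponentMk x') (B.connectedComponentMk x)
  constructor <;> omega

theorem isGridSplit_of_ne (h : NearlyComplete (R ⊔ B) X Y d) (hXY : #X = #Y)
    (hno : ∀ i j, ¬ HoleBound (componentUnion R B i j) X Y (#Y + 3 * d)) {x x' : V}
    (hx : x ∈ X) (hx' : x' ∈ X) (hR : R.connectedComponentMk x ≠ R.connectedComponentMk x')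
    (hB : B.connectedComponentMk x ≠ B.connectedComponentMk x') : IsGridSplit R B X Y := by
  have hcellX : ∀ i j, #(componentPart i (componentPart j X)) + 3 * d < #X := fun i j =>
    not_le.1 fun hle => hno i j (h.holeBound_of_card_le_card_cell hXY (by omega) hle)
  have hcellY : ∀ i j, #(componentPart i (componentPart j Y)) + 3 * d < #Y := fun i j =>
    not_le.1 fun hle => hno i j
      (hXY ▸ (h.symm.holeBound_of_card_le_card_cell hXY.symm (by omega) hle).symm)
  obtain ⟨hP, hQ⟩ := h.lt_card_opposite_cells hcellY hx hx' hR hB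
  obtain ⟨y, hy⟩ := Finset.card_pos.1 (Nat.zero_lt_of_lt hP)
  obtain ⟨y', hy'⟩ := Finset.card_pos.1 (Nat.zero_lt_of_lt hQ)
  simp only [mem_componentPart] at hy hy'
  obtain ⟨⟨hyY, hyB⟩, hyR⟩ := hy
  obtain ⟨⟨hyY', hyB'⟩, hyR'⟩ := hy'
  obtain ⟨hP', hQ'⟩ := h.symm.lt_card_opposite_cells hcellX hyY hyY'
    (by rwa [hyR, hyR']) (by rw [hyB, hyB']; exact hB.symm)
  rw [hyR, hyB'] at hP'
  rw [hyR', hyB] at hQ'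
  exact ⟨_, _, _, _, hR, hB, fun z hz => h.mem_cell_or_mem_cell hR hB hP hQ hz,
    fun z hz => h.symm.mem_cell_or_mem_cell hR hB.symm hP' hQ' hz⟩

theorem exists_holeBound_or_isGridSplit [Nonempty V] (h : NearlyComplete (R ⊔ B) X Y d)
    (hXY : #X = #Y) :
    (∃ i j, HoleBound (componentUnion R B i j) X Y (#Y + 3 * d)) ∨ IsGridSplit R B X Y := by
  by_cases hline : ∀ x ∈ X, ∀ x' ∈ X, R.connectedComponentMk x = R.connectedComponentMk x' ∨
      B.connectedComponentMk x = B.connectedComponentMk x'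
  · left
    rcases forall_eq_or_forall_eq_of_pairwise _ _ hline with ⟨i, hi⟩ | ⟨j, hj⟩
    · obtain ⟨j, hij⟩ := h.exists_holeBound_of_forall_eq hXY hi
      exact ⟨i, j, hij.mono (by omega)⟩
    · rw [sup_comm] at h
      obtain ⟨i, hij⟩ := h.exists_holeBound_of_forall_eq hXY hj
      rw [componentUnion_comm] at hij
      exact ⟨i, j, hij.mono (by omega)⟩
  · push Not at hline
    obtain ⟨x, hx, x', hx', hR, hB⟩ := hline
    by_cases hno : ∃ i j, HoleBound (componentUnion R B i j) X Y (#Y + 3 * d)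
    · exact Or.inl hno
    · push Not at hno
      exact Or.inr (h.isGridSplit_of_ne hXY hno hx hx' hR hB)

end NearlyComplete

end Grid

section Colouring

open scoped Finset

variable {V : Type*} {G : SimpleGraph V} {c : Sym2 V → Bool} {X Y : Finset V} {d : ℕ}

theorem monoSubgraph_adj {b : Bool} {u v : V} :
    (monoSubgraph G c b).Adj u v ↔ G.Adj u v ∧ c s(u, v) = b := by
  rw [monoSubgraph, fromEdgeSet_adj]
  exact ⟨And.left, fun h => ⟨h, h.1.ne⟩⟩

theorem monoSubgraph_true_sup_monoSubgraph_false :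
    monoSubgraph G c true ⊔ monoSubgraph G c false = G := by
  ext u v
  rw [sup_adj, monoSubgraph_adj, monoSubgraph_adj, ← and_or_left, and_iff_left_iff_imp]
  exact fun _ => Bool.eq_false_or_eq_true _

theorem connectedComponentMk_monoSubgraph_eq {b : Bool} {u v : V} (huv : G.Adj u v)
    (hc : c s(u, v) = b) :
    (monoSubgraph G c b).connectedComponentMk u = (monoSubgraph G c b).connectedComponentMk v :=
  ConnectedComponent.connectedComponentMk_eq_of_adj (monoSubgraph_adj.2 ⟨huv, hc⟩)

theorem IsGridSplit.isSplitColouring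
    (h : IsGridSplit (monoSubgraph G c true) (monoSubgraph G c false) X Y) :
    IsSplitColouring G c X Y := by
  obtain ⟨i, k, j, l, hik, hjl, hX, hY⟩ := h
  let r := (monoSubgraph G c true).connectedComponentMk
  let q := (monoSubgraph G c false).connectedComponentMk
  have hblue : ∀ u v, G.Adj u v → r u ≠ r v → c s(u, v) = false := fun u v huv hne =>
    Bool.eq_false_of_not_eq_true fun hc => hne (connectedComponentMk_monoSubgraph_eq huv hc)
  have hred : ∀ u v, G.Adj u v → q u ≠ q v → c s(u, v) = true := fun u v huv hne =>
    Bool.eq_true_of_not_eq_false fun hc => hne (connectedComponentMk_monoSubgraph_eq huv hc)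
  refine ⟨{v | v ∈ X ∧ r v = i ∧ q v = j}, {v | v ∈ X ∧ r v = k ∧ q v = l},
    {v | v ∈ Y ∧ r v = k ∧ q v = j}, {v | v ∈ Y ∧ r v = i ∧ q v = l}, ?_, ?_, ?_, ?_, ?_, ?_⟩
  · ext v
    have := hX v
    simp only [Set.mem_union, Set.mem_ofPred_eq, Finset.mem_coe]
    tauto
  · rw [Set.disjoint_left]
    rintro v ⟨-, hv, -⟩ ⟨-, hv', -⟩
    exact hik (hv.symm.trans hv')
  · ext v
    have := hY v
    simp only [Set.mem_union, Set.mem_ofPred_eq, Finset.mem_coe]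
    tauto
  · rw [Set.disjoint_left]
    rintro v ⟨-, hv, -⟩ ⟨-, hv', -⟩
    exact hik (hv'.symm.trans hv)
  · intro u v huv h
    refine hblue u v huv ?_
    simp only [Set.mem_ofPred_eq] at h
    grind
  · intro u v huv h
    refine hred u v huv ?_
    simp only [Set.mem_ofPred_eq] at h
    grind

/-- The edges of colour `b` of a subgraph `M`. -/
def colourPart {H : SimpleGraph V} (c : Sym2 V → Bool) (b : Bool) (M : H.Subgraph) :
    Set (Sym2 V) :=
  {e ∈ M.edgeSet | c e = b}

section ColourPart

variable {H : SimpleGraph V} {M : H.Subgraph}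

theorem mem_matchSupport_colourPart {b : Bool} {v : V} :
    v ∈ matchSupport (colourPart c b M) ↔ ∃ w, M.Adj v w ∧ c s(v, w) = b := by
  constructor
  · rintro ⟨e, ⟨he, hc⟩, hv⟩
    obtain ⟨w, rfl⟩ := Sym2.mem_iff_exists.1 hv
    exact ⟨w, he, hc⟩
  · rintro ⟨w, hvw, hc⟩
    exact ⟨s(v, w), ⟨hvw, hc⟩, Sym2.mem_mk_left v w⟩

theorem isConnMatching_colourPart (hM : M.IsMatching) (hHG : H ≤ G) {b : Bool}
    {C : (monoSubgraph G c b).ConnectedComponent}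
    (hC : ∀ u v, H.Adj u v → c s(u, v) = b → (monoSubgraph G c b).connectedComponentMk u = C) :
    IsConnMatching G c b (colourPart c b M) := by
  have hmem : ∀ e ∈ colourPart c b M, ∀ x ∈ e,
      (monoSubgraph G c b).connectedComponentMk x = C := by
    rintro e ⟨he, hc⟩ x hx
    obtain ⟨y, rfl⟩ := Sym2.mem_iff_exists.1 hx
    exact hC x y (M.adj_sub he) hc
  refine ⟨fun e he => ⟨edgeSet_mono hHG (M.edgeSet_subset he.1), he.2⟩, ?_, ?_⟩
  · rintro e ⟨he, -⟩ e' ⟨he', -⟩ hne x hx hx'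
    obtain ⟨y, rfl⟩ := Sym2.mem_iff_exists.1 hx
    obtain ⟨z, rfl⟩ := Sym2.mem_iff_exists.1 hx'
    exact hne (congrArg (s(x, ·)) (hM.eq_of_adj_left he he'))
  · intro e he e' he' x hx y hy
    exact ConnectedComponent.exact ((hmem e he x hx).trans (hmem e' he' y hy).symm)

theorem disjoint_matchSupport_colourPart (hM : M.IsMatching) :
    Disjoint (matchSupport (colourPart c true M)) (matchSupport (colourPart c false M)) := by
  rw [Set.disjoint_left]
  intro v hred hblue
  obtain ⟨u, hu, hcu⟩ := mem_matchSupport_colourPart.1 hred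
  obtain ⟨w, hw, hcw⟩ := mem_matchSupport_colourPart.1 hblue
  rw [hM.eq_of_adj_left hu hw, hcw] at hcu
  exact Bool.false_ne_true hcu

theorem matchSupport_colourPart_union (hM : M.IsMatching) :
    matchSupport (colourPart c true M) ∪ matchSupport (colourPart c false M) = M.verts := by
  ext v
  rw [Set.mem_union, mem_matchSupport_colourPart, mem_matchSupport_colourPart, ← exists_or,
    ← hM.support_eq_verts, Subgraph.mem_support]
  refine exists_congr fun w => ?_
  rw [← and_or_left, and_iff_left_iff_imp]
  exact fun _ => Bool.eq_false_or_eq_true _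

end ColourPart

theorem exists_isConnMatching_of_holeBound [Fintype V] (hdisj : Disjoint X Y)
    (hXY : 2 * #X = Fintype.card V) {k : ℕ} {i : (monoSubgraph G c true).ConnectedComponent}
    {j : (monoSubgraph G c false).ConnectedComponent}
    (h : HoleBound (componentUnion (monoSubgraph G c true) (monoSubgraph G c false) i j) X Y
      (#Y + k)) :
    ∃ MR MB : Set (Sym2 V), IsConnMatching G c true MR ∧ IsConnMatching G c false MB ∧
      Disjoint (matchSupport MR) (matchSupport MB) ∧
      (Set.univ \ (matchSupport MR ∪ matchSupport MB)).ncard ≤ 2 * k := by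
  obtain ⟨M, hM, hcard⟩ := h.exists_isMatching hdisj
  have hadj {u v : V} (huv : (componentUnion (monoSubgraph G c true) (monoSubgraph G c false)
      i j).Adj u v) :
      (G.Adj u v ∧ c s(u, v) = true) ∧ (monoSubgraph G c true).connectedComponentMk u = i ∨
        (G.Adj u v ∧ c s(u, v) = false) ∧ (monoSubgraph G c false).connectedComponentMk u = j := by
    simpa only [componentUnion_adj, monoSubgraph_adj] using huv
  have hle : componentUnion (monoSubgraph G c true) (monoSubgraph G c false) i j ≤ G :=
    fun u v huv => (hadj huv).elim (·.1.1) (·.1.1)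
  refine ⟨colourPart c true M, colourPart c false M,
    isConnMatching_colourPart hM hle (C := i) fun u v huv hc => ?_,
    isConnMatching_colourPart hM hle (C := j) fun u v huv hc => ?_,
    disjoint_matchSupport_colourPart hM, ?_⟩
  · exact (hadj huv).elim And.right fun h => by simp [hc] at h
  · exact (hadj huv).elim (fun h => by simp [hc] at h) And.right
  · rw [matchSupport_colourPart_union hM, ← Set.compl_eq_univ_sdiff]
    have := Set.ncard_add_ncard_compl M.verts
    rw [Nat.card_eq_fintype_card] at this
    omega

theorem isBipartiteWith_of_forall_ne [Fintype V] (f : V → Fin 2)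
    (hf : ∀ x y, G.Adj x y → f x ≠ f y) :
    G.IsBipartiteWith ({v | f v = 0} : Finset V) ({v | f v = 1} : Finset V) where
  disjoint := by
    rw [Set.disjoint_left]
    intro v hv hv'
    simp_all
  mem_of_adj x y hxy := by
    have := hf x y hxy
    simp only [Finset.coe_filter_univ, Set.mem_ofPred_eq]
    omega

theorem degree_le_of_isBipartiteWith [Fintype V] [DecidableRel G.Adj]
    (hG : G.IsBipartiteWith X Y) (hXY : #X = #Y) (v : V) : G.degree v ≤ #Y := by
  rcases (G.degree v).eq_zero_or_pos with hv | hv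
  · exact hv ▸ Nat.zero_le _
  obtain ⟨w, hw⟩ := (G.degree_pos_iff_exists_adj v).1 hv
  rcases hG.mem_of_adj hw with ⟨hvX, -⟩ | ⟨hvY, -⟩
  · exact isBipartiteWith_degree_le hG hvX
  · exact hXY ▸ isBipartiteWith_degree_le' hG hvY

theorem nearlyComplete_of_isBipartiteWith [Fintype V] [DecidableRel G.Adj]
    (hG : G.IsBipartiteWith X Y) (hX : ∀ x ∈ X, #Y ≤ G.degree x + d)
    (hY : ∀ y ∈ Y, #X ≤ G.degree y + d) : NearlyComplete G X Y d := by
  classical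
  have key {X Y : Finset V} (hG : G.IsBipartiteWith X Y) {x : V} (hx : x ∈ X)
      (hdeg : #Y ≤ G.degree x + d) (T : Finset V) (hT : T ⊆ Y) (hno : ∀ y ∈ T, ¬ G.Adj x y) :
      #T ≤ d := by
    have hdisj : Disjoint T (G.neighborFinset x) :=
      Finset.disjoint_left.2 fun y hy hxy => hno y hy ((G.mem_neighborFinset x y).1 hxy)
    have hle : #(T ∪ G.neighborFinset x) ≤ #Y :=
      Finset.card_le_card (Finset.union_subset hT (isBipartiteWith_neighborFinset_subset hG hx))
    rw [Finset.card_union_of_disjoint hdisj, card_neighborFinset_eq_degree] at hle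
    omega
  exact ⟨fun x hx => key hG hx (hX x hx), fun y hy => key hG.symm hy (hY y hy)⟩

theorem exists_isConnMatching_of_le_degree [Fintype V] [Nonempty V] [DecidableRel G.Adj]
    (hG : G.IsBipartiteWith X Y) (hX : 2 * #X = Fintype.card V) (hY : 2 * #Y = Fintype.card V)
    (hdeg : ∀ v, #Y ≤ G.degree v + d) (hsplit : ¬ IsSplitColouring G c X Y) :
    ∃ MR MB : Set (Sym2 V), IsConnMatching G c true MR ∧ IsConnMatching G c false MB ∧
      Disjoint (matchSupport MR) (matchSupport MB) ∧
      (Set.univ \ (matchSupport MR ∪ matchSupport MB)).ncard ≤ 6 * d := by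
  have hXY : #X = #Y := by omega
  have hnear : NearlyComplete (monoSubgraph G c true ⊔ monoSubgraph G c false) X Y d := by
    rw [monoSubgraph_true_sup_monoSubgraph_false]
    exact nearlyComplete_of_isBipartiteWith hG (fun x _ => hdeg x) fun y _ => hXY ▸ hdeg y
  obtain ⟨i, j, hij⟩ := (hnear.exists_holeBound_or_isGridSplit hXY).resolve_right
    fun h => hsplit h.isSplitColouring
  obtain ⟨MR, MB, hMR, hMB, hdisj, hcard⟩ :=
    exists_isConnMatching_of_holeBound (Finset.disjoint_coe.1 hG.disjoint) hX hij
  exact ⟨MR, MB, hMR, hMB, hdisj, by omega⟩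

end Colouring

theorem stmt12_general {V : Type*} [Fintype V] (ε : ℝ)
    (f : V → Fin 2)
    (G : SimpleGraph V) [DecidableRel G.Adj]
    (hbip : ∀ x y, G.Adj x y → f x ≠ f y)
    (hbal0 : 2 * ({v | f v = 0} : Set V).ncard = Fintype.card V)
    (hbal1 : 2 * ({v | f v = 1} : Set V).ncard = Fintype.card V)
    (hdeg : ∀ v : V, (1 - ε) * (Fintype.card V : ℝ) / 2 ≤ (G.degree v : ℝ))
    (c : Sym2 V → Bool)
    (hnsplit : ¬ IsSplitColouring G c {v | f v = 0} {v | f v = 1}) :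
    ∃ MR MB : Set (Sym2 V),
      IsConnMatching G c true MR ∧ IsConnMatching G c false MB ∧
      Disjoint (matchSupport MR) (matchSupport MB) ∧
      ((Set.univ \ (matchSupport MR ∪ matchSupport MB)).ncard : ℝ) ≤
        3 * ε * (Fintype.card V : ℝ) := by
  classical
  rcases isEmpty_or_nonempty V with hV | hV
  · exact ⟨∅, ∅, by simp [IsConnMatching], by simp [IsConnMatching], by simp [matchSupport],
      by simp [Set.eq_empty_of_isEmpty]⟩
  have hclass (a : Fin 2) : ({v | f v = a} : Set V) = ({v | f v = a} : Finset V) :=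
    (Finset.coe_filter_univ _).symm
  rw [hclass, hclass] at hnsplit
  rw [hclass, Set.ncard_coe_finset] at hbal0 hbal1
  have hG := isBipartiteWith_of_forall_ne f hbip
  set m := Finset.card {v | f v = 1}
  obtain ⟨v, hv⟩ := G.exists_minimal_degree_vertex
  have hvm : G.degree v ≤ m := degree_le_of_isBipartiteWith hG (by omega) v
  have hd : ((m - G.degree v : ℕ) : ℝ) ≤ ε * m := by
    have := hdeg v
    rw [← hbal1] at this
    push_cast [hvm] at this ⊢
    linarith
  obtain ⟨MR, MB, hMR, hMB, hdisj, hcard⟩ := exists_isConnMatching_of_le_degree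
    (d := m - G.degree v) hG hbal0 hbal1 (fun w => by
      have := G.minDegree_le_degree w
      omega) hnsplit
  refine ⟨MR, MB, hMR, hMB, hdisj, (Nat.cast_le.2 hcard).trans ?_⟩
  rw [← hbal1]
  push_cast
  linarith

/-- Lemma 4.3: let `0 < ε < 1/5` and let `G` be a balanced bipartite graph on `n` vertices
with classes `V₁, V₂` of size `n/2` each, of minimum degree at least `(1 − ε)n/2`. If the
edges are red/blue-coloured and the colouring is not a split colouring, then there are a
red and a blue connected matching, vertex-disjoint, covering all but at most `4εn`
vertices. -/
theorem stmt12 {V : Type*} [Fintype V] (ε : ℝ) (hε0 : 0 < ε) (hε1 : ε < 1 / 5)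
    (f : V → Fin 2)
    (G : SimpleGraph V) [DecidableRel G.Adj]
    (hbip : ∀ x y, G.Adj x y → f x ≠ f y)
    (hbal0 : 2 * ({v | f v = 0} : Set V).ncard = Fintype.card V)
    (hbal1 : 2 * ({v | f v = 1} : Set V).ncard = Fintype.card V)
    (hdeg : ∀ v : V, (1 - ε) * (Fintype.card V : ℝ) / 2 ≤ (G.degree v : ℝ))
    (c : Sym2 V → Bool)
    (hnsplit : ¬ IsSplitColouring G c {v | f v = 0} {v | f v = 1}) :
    ∃ MR MB : Set (Sym2 V),
      IsConnMatching G c true MR ∧ IsConnMatching G c false MB ∧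
      Disjoint (matchSupport MR) (matchSupport MB) ∧
      ((Set.univ \ (matchSupport MR ∪ matchSupport MB)).ncard : ℝ) ≤
        4 * ε * (Fintype.card V : ℝ) := by
  obtain ⟨MR, MB, hMR, hMB, hdisj, hcard⟩ := stmt12_general ε f G hbip hbal0 hbal1 hdeg c hnsplit
  exact ⟨MR, MB, hMR, hMB, hdisj, hcard.trans (by gcongr; norm_num)⟩
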